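/- Let ℓ ≥ 2, q prime, 0 ≤ γ < q/2, and G the ℓ×ℓ circulant matrix generated by [⌊q/2⌋, γ, 0, ..., 0]. For any m_Δ ∈ {-1,1}^ℓ (full Hamming weight), the toroidal norm of G m_Δ is at least √ℓ·(⌊q/2⌋ - γ), with equality when the signs of m_Δ alternate. -/

import Mathlib

/-- Centered representative of `x` modulo `q`, lying in `[-q/2, q/2)`. -/
def cmod (q x : ℤ) : ℤ := (x + q / 2) % q - q / 2

/-- The `L₂`-norm toroidal distance between integer vectors, modulus `q`. -/
noncomputable def tdistI (q : ℤ) {ℓ : ℕ} (v₁ v₂ : Fin ℓ → ℤ) : ℝ :=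
  Real.sqrt (∑ i, ((cmod q (v₁ i - v₂ i) : ℤ) : ℝ) ^ 2)

/-- Multiplication by the `ℓ × ℓ` circulant matrix generated by `[a, γ, 0, …, 0]`. -/
def minalEnc (ℓ : ℕ) (a γ : ℤ) (m : Fin ℓ → ℤ) : Fin ℓ → ℤ :=
  fun i => a * m i + γ * m (finRotate ℓ i)

/-!
`|cmod q x|` is the quotient norm of `x` in `ℤ / qℤ`: the least absolute value in its residue class.
It therefore satisfies the reverse triangle inequality, and it agrees with `|x|` as long as
`|x| ≤ q / 2`. Each coordinate of `G m` has the form `± a ± γ` with `0 ≤ γ ≤ a ≤ q / 2`, so its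
quotient norm is at least `a - γ`, and is exactly `a - γ` when the two signs differ.
-/

section CenteredResidue

variable {q x y : ℤ}

theorem cmod_modEq (q x : ℤ) : cmod q x ≡ x [ZMOD q] := by
  simpa [cmod] using (Int.mod_modEq (x + q / 2) q).sub_right (q / 2)

theorem two_mul_abs_cmod_le (hq : 0 < q) (x : ℤ) : 2 * |cmod q x| ≤ q := by
  have h_nonneg := Int.emod_nonneg (x + q / 2) hq.ne'
  have h_lt := Int.emod_lt_of_pos (x + q / 2) hq
  have h_abs : |cmod q x| ≤ q / 2 := by
    rw [abs_le, cmod]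
    omega
  omega

theorem abs_le_abs_of_modEq (hx : 2 * |x| ≤ q) (hxy : x ≡ y [ZMOD q]) : |x| ≤ |y| := by
  by_contra! h_lt
  have h_dist : |y - x| < q := by linarith [abs_sub y x]
  have h_eq : y = x := sub_eq_zero.mp (Int.eq_zero_of_abs_lt_dvd hxy.dvd h_dist)
  exact h_lt.ne (congrArg abs h_eq)

theorem abs_cmod_le_abs_of_modEq (hq : 0 < q) (hxy : x ≡ y [ZMOD q]) : |cmod q x| ≤ |y| :=
  abs_le_abs_of_modEq (two_mul_abs_cmod_le hq x) ((cmod_modEq q x).trans hxy)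

theorem abs_cmod_eq_abs (hq : 0 < q) (hx : 2 * |x| ≤ q) : |cmod q x| = |x| :=
  (abs_cmod_le_abs_of_modEq hq rfl).antisymm (abs_le_abs_of_modEq hx (cmod_modEq q x).symm)

theorem abs_cmod_sub_abs_le_abs_cmod_add (hq : 0 < q) (x y : ℤ) :
    |cmod q x| - |y| ≤ |cmod q (x + y)| := by
  have h_modEq : x ≡ cmod q (x + y) - y [ZMOD q] := by
    simpa using ((cmod_modEq q (x + y)).sub_right y).symm
  have h_min := abs_cmod_le_abs_of_modEq hq h_modEq
  linarith [abs_sub (cmod q (x + y)) y]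

end CenteredResidue

section ToroidalDistance

variable {q c : ℤ} {ℓ : ℕ} {v w : Fin ℓ → ℤ}

theorem sqrt_mul_eq_sqrt_sum_const (ℓ : ℕ) {r : ℝ} (hr : 0 ≤ r) :
    √ℓ * r = √(∑ _i : Fin ℓ, r ^ 2) := by
  rw [Fin.sum_const, nsmul_eq_mul, Real.sqrt_mul ℓ.cast_nonneg, Real.sqrt_sq hr]

theorem sqrt_mul_le_tdistI (hc : 0 ≤ c) (h : ∀ i, c ≤ |cmod q (v i - w i)|) :
    √ℓ * c ≤ tdistI q v w := by
  rw [sqrt_mul_eq_sqrt_sum_const ℓ (Int.cast_nonneg hc), tdistI]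
  gcongr √(∑ i, ?_) with i
  exact_mod_cast sq_le_sq.mpr ((abs_of_nonneg hc).trans_le (h i))

theorem tdistI_eq_sqrt_mul (hc : 0 ≤ c) (h : ∀ i, |cmod q (v i - w i)| = c) :
    tdistI q v w = √ℓ * c := by
  rw [sqrt_mul_eq_sqrt_sum_const ℓ (Int.cast_nonneg hc), tdistI]
  congr! 2 with i
  exact_mod_cast (sq_eq_sq_iff_abs_eq_abs _ _).mpr ((h i).trans (abs_of_nonneg hc).symm)

end ToroidalDistance

section Encoding

variable {q a γ : ℤ} {ℓ : ℕ} {m : Fin ℓ → ℤ}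

theorem abs_sub_abs_le_abs_cmod_minalEnc (hq : 0 < q) (haq : 2 * |a| ≤ q) (hm : ∀ i, |m i| = 1)
    (i : Fin ℓ) : |a| - |γ| ≤ |cmod q (minalEnc ℓ a γ m i)| := by
  have h_abs (b : ℤ) (j : Fin ℓ) : |b * m j| = |b| := by rw [abs_mul, hm, mul_one]
  calc |a| - |γ| = |cmod q (a * m i)| - |γ * m (finRotate ℓ i)| := by
        rw [abs_cmod_eq_abs hq (by rwa [h_abs]), h_abs, h_abs]
    _ ≤ |cmod q (minalEnc ℓ a γ m i)| := abs_cmod_sub_abs_le_abs_cmod_add hq _ _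

theorem abs_cmod_minalEnc_of_alternating (hq : 0 < q) (haγ : 2 * |a - γ| ≤ q) {i : Fin ℓ}
    (hm : |m i| = 1) (h_alt : m (finRotate ℓ i) = -m i) :
    |cmod q (minalEnc ℓ a γ m i)| = |a - γ| := by
  have h_enc : minalEnc ℓ a γ m i = (a - γ) * m i := by
    rw [minalEnc, h_alt]
    ring
  have h_abs : |minalEnc ℓ a γ m i| = |a - γ| := by rw [h_enc, abs_mul, hm, mul_one]
  rw [abs_cmod_eq_abs hq (by rwa [h_abs]), h_abs]

theorem neg_one_pow_finRotate {R : Type*} [Monoid R] [HasDistribNeg R] (hℓ : Even ℓ)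
    (i : Fin ℓ) : (-1 : R) ^ (finRotate ℓ i : ℕ) = -(-1 : R) ^ (i : ℕ) := by
  obtain _ | n := ℓ
  · exact i.elim0
  obtain rfl | hi := eq_or_ne i (Fin.last n)
  · have hn : Odd n := Nat.not_even_iff_odd.mp (Nat.even_add_one.mp hℓ)
    simp [hn.neg_one_pow]
  · rw [coe_finRotate_of_ne_last hi, pow_succ, mul_neg_one]

end Encoding

theorem stmt6_general {q a γ : ℤ} (hq : 0 < q) (hγ : 0 ≤ γ) (hγa : γ ≤ a) (haq : 2 * a ≤ q)
    {ℓ : ℕ} {m : Fin ℓ → ℤ} (hm : ∀ i, |m i| = 1) :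
    √ℓ * ((a : ℝ) - γ) ≤ tdistI q (minalEnc ℓ a γ m) 0 ∧
      ((∀ i, m (finRotate ℓ i) = -m i) →
        tdistI q (minalEnc ℓ a γ m) 0 = √ℓ * ((a : ℝ) - γ)) := by
  have h_nonneg : 0 ≤ a - γ := sub_nonneg.mpr hγa
  have ha : |a| = a := abs_of_nonneg (hγ.trans hγa)
  rw [← Int.cast_sub]
  refine ⟨sqrt_mul_le_tdistI h_nonneg fun i => ?_,
    fun h_alt => tdistI_eq_sqrt_mul h_nonneg fun i => ?_⟩ <;>
    rw [Pi.zero_apply, sub_zero]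
  · have h_lower := abs_sub_abs_le_abs_cmod_minalEnc (γ := γ) hq (by rwa [ha]) hm i
    rwa [ha, abs_of_nonneg hγ] at h_lower
  · have h_abs : |a - γ| = a - γ := abs_of_nonneg h_nonneg
    rw [abs_cmod_minalEnc_of_alternating hq (by omega) (hm i) (h_alt i), h_abs]

/-- for any full-weight `m_Δ ∈ {-1,1}^ℓ`, the toroidal norm of
`G m_Δ` is at least `√ℓ · (⌊q/2⌋ - γ)`, with equality for the alternating-sign
vector `m_Δ i = (-1)^i` (the signs alternate consistently since `ℓ` is even). -/
theorem stmt6 (q ℓ : ℕ) (hq : q.Prime) (hℓ : 2 ≤ ℓ)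
    (γ : ℤ) (hγ0 : 0 ≤ γ) (hγ : (γ : ℝ) < (q : ℝ) / 2) :
    (∀ mΔ : Fin ℓ → ℤ, (∀ i, mΔ i = -1 ∨ mΔ i = 1) →
      Real.sqrt ℓ * ((((q : ℤ) / 2 : ℤ) : ℝ) - (γ : ℝ))
        ≤ tdistI (q : ℤ) (minalEnc ℓ ((q : ℤ) / 2) γ mΔ) 0) ∧
    (Even ℓ →
      tdistI (q : ℤ) (minalEnc ℓ ((q : ℤ) / 2) γ (fun i => (-1 : ℤ) ^ (i : ℕ))) 0
        = Real.sqrt ℓ * ((((q : ℤ) / 2 : ℤ) : ℝ) - (γ : ℝ))) := by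
  have hq_pos : (0 : ℤ) < q := mod_cast hq.pos
  have hγq : 2 * γ < q := by
    have : 2 * (γ : ℝ) < q := by linarith
    exact_mod_cast this
  have h_general {m : Fin ℓ → ℤ} (hm : ∀ i, |m i| = 1) :=
    stmt6_general hq_pos hγ0 (a := (q : ℤ) / 2) (by omega) (by omega) hm
  exact ⟨fun _ hm => (h_general fun i => (abs_eq zero_le_one).mpr (hm i).symm).1,
    fun hℓ_even => (h_general fun i => abs_neg_one_pow i).2 (neg_one_pow_finRotate hℓ_even)⟩
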